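/- For integers k ≥ 1 and 1 ≤ a ≤ k: Σ_{n≥0} \overline{U}_{2k,2a−1}(n) q^n = Σ_{n≥0} \overline{U}_{2k,2a}(n) q^n = (−q^2;q^2)_∞^2 (q^{2a}, q^{4k−2a}, q^{4k}; q^{4k})_∞ / (q^2;q^2)_∞, where \overline{U}_{2k,b}(n) counts overpartitions of n satisfying f_1 ≤ b−1+f_{1̄}, f_{2l} ≥ f_{\overline{2l}}, f_{2l−1}+f_{\overline{2l−1}} ≡ 0 (mod 2), and f_l+f_{l̄}+f_{l+1} ≤ 2k−1+f_{\overline{l+1}}. -/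

import Mathlib

/-- An overpartition recorded by a pair of multiplicity functions:
`p.1 i` is the number of non-overlined occurrences of the part `i` and
`p.2 i ∈ {0, 1}` is the number of overlined occurrences of `i`.
There are no parts equal to `0`. -/
def IsOverPtn (p : (ℕ →₀ ℕ) × (ℕ →₀ ℕ)) : Prop :=
  p.1 0 = 0 ∧ p.2 0 = 0 ∧ ∀ i, p.2 i ≤ 1

/-- The number of parts of an overpartition. -/
def opParts (p : (ℕ →₀ ℕ) × (ℕ →₀ ℕ)) : ℕ :=
  (p.1.sum fun _ v => v) + (p.2.sum fun _ v => v)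

/-- The weight (number partitioned) of an overpartition. -/
def opWt (p : (ℕ →₀ ℕ) × (ℕ →₀ ℕ)) : ℕ :=
  (p.1.sum fun i v => i * v) + (p.2.sum fun i v => i * v)

/-- Conditions (i)-(iv) of Definition 1.6 (Kursungoz–Zadehdabbagh), with modulus `d`,
first index `N = dk + e` and second index `M = da + f`: writing `f_i = p.1 i`,
`f_{ī} = p.2 i`,
(i) `f_1 ≤ M - 1 + (d-1) f_{1̄}`;
(ii) `f_{2l-1} ≥ (d-1) f_{\overline{2l-1}}`;
(iii) `f_{2l} + f_{\overline{2l}} ≡ 0 (mod d)`;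
(iv) `f_l + f_{l̄} + f_{l+1} ≤ N - 1 + (d-1) f_{\overline{l+1}}` for all `l ≥ 1`. -/
def uCond (d N M : ℕ) (p : (ℕ →₀ ℕ) × (ℕ →₀ ℕ)) : Prop :=
  p.1 1 + 1 ≤ M + (d - 1) * p.2 1 ∧
  (∀ l : ℕ, (d - 1) * p.2 (2 * l + 1) ≤ p.1 (2 * l + 1)) ∧
  (∀ l : ℕ, d ∣ p.1 (2 * l + 2) + p.2 (2 * l + 2)) ∧
  (∀ l : ℕ, 1 ≤ l → p.1 l + p.2 l + p.1 (l + 1) + 1 ≤ N + (d - 1) * p.2 (l + 1))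

/-- Conditions (ī)-(iv̄): as `uCond` with the parity roles of odd and even parts
swapped in the second and third conditions. -/
def ubarCond (d N M : ℕ) (p : (ℕ →₀ ℕ) × (ℕ →₀ ℕ)) : Prop :=
  p.1 1 + 1 ≤ M + (d - 1) * p.2 1 ∧
  (∀ l : ℕ, (d - 1) * p.2 (2 * l + 2) ≤ p.1 (2 * l + 2)) ∧
  (∀ l : ℕ, d ∣ p.1 (2 * l + 1) + p.2 (2 * l + 1)) ∧
  (∀ l : ℕ, 1 ≤ l → p.1 l + p.2 l + p.1 (l + 1) + 1 ≤ N + (d - 1) * p.2 (l + 1))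

/-- `u_{N, M}(m, n)`: the number of overpartitions of `n` into `m` parts
satisfying conditions (i)-(iv). -/
noncomputable def uCount (d N M m n : ℕ) : ℕ :=
  Set.ncard {p : (ℕ →₀ ℕ) × (ℕ →₀ ℕ) |
    IsOverPtn p ∧ opParts p = m ∧ opWt p = n ∧ uCond d N M p}

/-- `ū_{N, M}(m, n)`: the number of overpartitions of `n` into `m` parts
satisfying conditions (ī)-(iv̄). -/
noncomputable def ubarCount (d N M m n : ℕ) : ℕ :=
  Set.ncard {p : (ℕ →₀ ℕ) × (ℕ →₀ ℕ) |
    IsOverPtn p ∧ opParts p = m ∧ opWt p = n ∧ ubarCond d N M p}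

/-- The two-variable generating function `U_{N,M}(x) = Σ u_{N,M}(m,n) x^m q^n`. -/
noncomputable def Ugf (d N M : ℕ) (x q : ℂ) : ℂ :=
  ∑' mn : ℕ × ℕ, (uCount d N M mn.1 mn.2 : ℂ) * x ^ mn.1 * q ^ mn.2

/-- The two-variable generating function `Ū_{N,M}(x) = Σ ū_{N,M}(m,n) x^m q^n`. -/
noncomputable def UbarGf (d N M : ℕ) (x q : ℂ) : ℂ :=
  ∑' mn : ℕ × ℕ, (ubarCount d N M mn.1 mn.2 : ℂ) * x ^ mn.1 * q ^ mn.2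

/-- The infinite q-Pochhammer symbol `(a; q)_∞ = ∏_{j ≥ 0} (1 - a q^j)`. -/
noncomputable def qPochInf (a q : ℂ) : ℂ := ∏' j : ℕ, (1 - a * q ^ j)

/-- The finite q-Pochhammer symbol `(a; q)_n = ∏_{j=0}^{n-1} (1 - a q^j)`. -/
noncomputable def qPochFin (a q : ℂ) (n : ℕ) : ℂ := ∏ j ∈ Finset.range n, (1 - a * q ^ j)

/-!
Write the multiplicities of an overpartition counted by `ubarCond 2 (2 * k) (2 * a)` as
`f_l = 2 g_l + e_l + ε_l`, `f_{l̄} = e_l` with `ε_l ∈ {0, 1}`. The parity condition forces `ε_l = 0`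
for odd `l`, and since two consecutive `ε` never both equal `1`, the remaining conditions say
exactly that `g_1 < a` and `g_l + e_l + g_{l+1} < k`. Thus `ε` is an arbitrary partition into
distinct even parts, which contributes `(−q²; q²)_∞`, while `(g, e)` is an overpartition as in the
Rogers–Ramanujan–Gordon theorem of Chen, Sang and Shi, counted with `q²` in place of `q`.

To prove that theorem, remove all parts equal to `j + 1` from the overpartitions with parts larger
than `j`: this gives a recursion for the generating functions. Andrews' series
`Σ (-1)^n q^(…) (1 - q^(…)) …` satisfies it too, and a solution of the recursion is determined by
its limit as `j → ∞`. At `j = 0` the series is a theta series, summed by the Jacobi triple product.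
-/

open Filter Topology Finset

section Pochhammer

variable {q : ℂ}

lemma summable_norm_mul_pow (a : ℂ) (hq : ‖q‖ < 1) : Summable fun j : ℕ => ‖-(a * q ^ j)‖ := by
  simp only [norm_neg, norm_mul, norm_pow]
  exact (summable_geometric_of_lt_one (norm_nonneg q) hq).mul_left _

lemma tendsto_qPochFin (a : ℂ) (hq : ‖q‖ < 1) :
    Tendsto (qPochFin a q) atTop (𝓝 (qPochInf a q)) := by
  have h := (multipliable_one_add_of_summable (summable_norm_mul_pow a hq)).hasProd.tendsto_prod_nat
  simp only [← sub_eq_add_neg] at h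
  exact h

lemma qPochInf_ne_zero {a : ℂ} (hq : ‖q‖ < 1) (h : ∀ j : ℕ, 1 - a * q ^ j ≠ 0) :
    qPochInf a q ≠ 0 := by
  have h := tprod_one_add_ne_zero_of_summable (f := fun j : ℕ => -(a * q ^ j))
    (by simpa only [← sub_eq_add_neg] using h) (summable_norm_mul_pow a hq)
  simp only [← sub_eq_add_neg] at h
  exact h

lemma qPochFin_zero (a q : ℂ) : qPochFin a q 0 = 1 := by simp [qPochFin]

lemma qPochFin_succ (a q : ℂ) (n : ℕ) :
    qPochFin a q (n + 1) = qPochFin a q n * (1 - a * q ^ n) := by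
  simp [qPochFin, prod_range_succ]

lemma norm_pow_succ_lt_one (hq : ‖q‖ < 1) (n : ℕ) : ‖q ^ (n + 1)‖ < 1 := by
  rw [norm_pow]
  exact pow_lt_one₀ (norm_nonneg q) hq n.succ_ne_zero

lemma one_sub_ne_zero_of_norm_lt_one (hq : ‖q‖ < 1) : 1 - q ≠ 0 := by
  intro h
  rw [← sub_eq_zero.1 h, norm_one] at hq
  exact hq.false

lemma one_sub_pow_ne_zero (hq : ‖q‖ < 1) (n : ℕ) : 1 - q ^ (n + 1) ≠ 0 :=
  one_sub_ne_zero_of_norm_lt_one (norm_pow_succ_lt_one hq n)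

lemma one_add_pow_ne_zero (hq : ‖q‖ < 1) (n : ℕ) : 1 + q ^ (n + 1) ≠ 0 := by
  simpa only [sub_neg_eq_add] using
    one_sub_ne_zero_of_norm_lt_one ((norm_neg _).trans_lt (norm_pow_succ_lt_one hq n))

lemma one_sub_mul_pow_ne_zero (hq : ‖q‖ < 1) (n : ℕ) : 1 - q * q ^ n ≠ 0 := by
  simpa only [pow_succ'] using one_sub_pow_ne_zero hq n

lemma one_sub_neg_mul_pow_ne_zero (hq : ‖q‖ < 1) (n : ℕ) : 1 - -q * q ^ n ≠ 0 := by
  simpa only [pow_succ', neg_mul, sub_neg_eq_add] using one_add_pow_ne_zero hq n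

lemma qPochFin_self_ne_zero (hq : ‖q‖ < 1) (n : ℕ) : qPochFin q q n ≠ 0 :=
  prod_ne_zero_iff.2 fun j _ => one_sub_mul_pow_ne_zero hq j

lemma qPochFin_neg_self_ne_zero (hq : ‖q‖ < 1) (n : ℕ) : qPochFin (-q) q n ≠ 0 :=
  prod_ne_zero_iff.2 fun j _ => one_sub_neg_mul_pow_ne_zero hq j

lemma qPochInf_self_ne_zero (hq : ‖q‖ < 1) : qPochInf q q ≠ 0 :=
  qPochInf_ne_zero hq (one_sub_mul_pow_ne_zero hq)

lemma qPochInf_neg_self_ne_zero (hq : ‖q‖ < 1) : qPochInf (-q) q ≠ 0 :=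
  qPochInf_ne_zero hq (one_sub_neg_mul_pow_ne_zero hq)

lemma tendsto_qPochFin_self_inv (hq : ‖q‖ < 1) :
    Tendsto (fun n => (qPochFin q q n)⁻¹) atTop (𝓝 (qPochInf q q)⁻¹) :=
  (tendsto_qPochFin q hq).inv₀ (qPochInf_self_ne_zero hq)

lemma exists_norm_le_of_tendsto {E : Type*} [SeminormedAddCommGroup E] {u : ℕ → E} {x : E}
    (h : Tendsto u atTop (𝓝 x)) : ∃ C : ℝ, ∀ n, ‖u n‖ ≤ C := by
  obtain ⟨C, h⟩ := (Metric.isBounded_range_of_tendsto u h).exists_norm_le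
  exact ⟨C, fun n => h _ ⟨n, rfl⟩⟩

end Pochhammer

section GaussianBinomial

/-- The Gaussian binomial coefficient `[M; r]_P`, defined by the `q`-Pascal recursion so that no
division by `1 - P ^ j` occurs. -/
def gaussBinom {R : Type*} [CommRing R] (P : R) : ℕ → ℕ → R
  | _, 0 => 1
  | 0, _ + 1 => 0
  | M + 1, r + 1 => P ^ (r + 1) * gaussBinom P M (r + 1) + gaussBinom P M r

section CommRing

variable {R : Type*} [CommRing R] (P : R)

lemma gaussBinom_zero_right (M : ℕ) : gaussBinom P M 0 = 1 := by
  cases M <;> rfl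

lemma gaussBinom_succ_succ (M r : ℕ) :
    gaussBinom P (M + 1) (r + 1) = P ^ (r + 1) * gaussBinom P M (r + 1) + gaussBinom P M r :=
  rfl

lemma gaussBinom_eq_zero_of_lt {M r : ℕ} (h : M < r) : gaussBinom P M r = 0 := by
  induction M generalizing r with
  | zero => obtain ⟨r, rfl⟩ := Nat.exists_eq_succ_of_ne_zero h.ne'; rfl
  | succ M ih =>
    obtain ⟨r, rfl⟩ := Nat.exists_eq_succ_of_ne_zero (Nat.ne_zero_of_lt h)
    rw [gaussBinom_succ_succ, ih (by lia), ih (by lia), mul_zero, add_zero]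

lemma sum_range_gaussBinom_succ (M : ℕ) (f : ℕ → R) :
    ∑ r ∈ range (M + 2), gaussBinom P (M + 1) r * f r =
      ∑ r ∈ range (M + 1), gaussBinom P M r * (P ^ r * f r + f (r + 1)) := by
  have hlast : ∑ r ∈ range (M + 1), gaussBinom P M r * (P ^ r * f r) =
      ∑ r ∈ range (M + 1), gaussBinom P M (r + 1) * (P ^ (r + 1) * f (r + 1)) + f 0 := by
    have h := sum_range_succ' (fun r => gaussBinom P M r * (P ^ r * f r)) (M + 1)
    rw [sum_range_succ, gaussBinom_eq_zero_of_lt P M.lt_succ_self] at h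
    simpa [gaussBinom_zero_right] using h
  rw [sum_range_succ', gaussBinom_zero_right, one_mul]
  simp only [gaussBinom_succ_succ, add_mul, mul_add, sum_add_distrib, hlast]
  simp only [mul_left_comm, mul_assoc]
  ring

theorem prod_one_add_mul_pow_eq_sum_gaussBinom (a : R) (M : ℕ) :
    ∏ j ∈ range M, (1 + a * P ^ j) =
      ∑ r ∈ range (M + 1), gaussBinom P M r * (P ^ r.choose 2 * a ^ r) := by
  induction M generalizing a with
  | zero => simp [gaussBinom_zero_right]
  | succ M ih =>
    rw [prod_range_succ', sum_range_gaussBinom_succ]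
    simp only [pow_succ', ← mul_assoc, ih (a * P), sum_mul, pow_zero, mul_one]
    refine sum_congr rfl fun r _ => ?_
    rw [Nat.choose_succ_succ' r 1, Nat.choose_one_right]
    ring

end CommRing

lemma gaussBinom_add_mul (P : ℂ) (a b : ℕ) :
    gaussBinom P (a + b) a * qPochFin P P a * qPochFin P P b = qPochFin P P (a + b) := by
  induction h : a + b generalizing a b with
  | zero =>
    obtain ⟨rfl, rfl⟩ : a = 0 ∧ b = 0 := by lia
    simp [gaussBinom_zero_right, qPochFin_zero]
  | succ M ih =>
    rcases a with _ | a
    · obtain rfl : b = M + 1 := by lia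
      simp [gaussBinom_zero_right, qPochFin_zero]
    rcases b with _ | b
    · obtain rfl : a = M := by lia
      have h := ih a 0 rfl
      rw [qPochFin_zero, mul_one] at h ⊢
      rw [gaussBinom_succ_succ, gaussBinom_eq_zero_of_lt P a.lt_succ_self, qPochFin_succ]
      linear_combination (1 - P * P ^ a) * h
    · have hleft := ih (a + 1) b (by lia)
      have hright := ih a (b + 1) (by lia)
      obtain rfl : M = a + b + 1 := by lia
      rw [qPochFin_succ] at hleft hright
      rw [gaussBinom_succ_succ, qPochFin_succ P P a, qPochFin_succ P P b,
        qPochFin_succ P P (a + b + 1)]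
      linear_combination P ^ (a + 1) * (1 - P * P ^ b) * hleft + (1 - P * P ^ a) * hright

section Limit

variable {P : ℂ}

lemma gaussBinom_add_eq_mul_inv (hP : ‖P‖ < 1) (a b : ℕ) :
    gaussBinom P (a + b) a = qPochFin P P (a + b) * (qPochFin P P a)⁻¹ * (qPochFin P P b)⁻¹ := by
  rw [← gaussBinom_add_mul]
  field_simp [qPochFin_self_ne_zero hP a, qPochFin_self_ne_zero hP b]

lemma tendsto_gaussBinom_add (hP : ‖P‖ < 1) {a b : ℕ → ℕ} (ha : Tendsto a atTop atTop)
    (hb : Tendsto b atTop atTop) :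
    Tendsto (fun N => gaussBinom P (a N + b N) (a N)) atTop (𝓝 (qPochInf P P)⁻¹) := by
  simp only [gaussBinom_add_eq_mul_inv hP]
  have h := (((tendsto_qPochFin P hP).comp (ha.atTop_add_atTop hb)).mul
    ((tendsto_qPochFin_self_inv hP).comp ha)).mul ((tendsto_qPochFin_self_inv hP).comp hb)
  rwa [mul_inv_cancel₀ (qPochInf_self_ne_zero hP), one_mul] at h

lemma exists_norm_gaussBinom_le (hP : ‖P‖ < 1) : ∃ C : ℝ, ∀ M r, ‖gaussBinom P M r‖ ≤ C := by
  obtain ⟨C, hC⟩ := exists_norm_le_of_tendsto (tendsto_qPochFin P hP)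
  obtain ⟨D, hD⟩ := exists_norm_le_of_tendsto (tendsto_qPochFin_self_inv hP)
  have hC0 : 0 ≤ C := (norm_nonneg _).trans (hC 0)
  have hD0 : 0 ≤ D := (norm_nonneg _).trans (hD 0)
  refine ⟨C * D * D, fun M r => ?_⟩
  rcases lt_or_ge M r with hr | hr
  · rw [gaussBinom_eq_zero_of_lt P hr, norm_zero]
    positivity
  · obtain ⟨b, rfl⟩ := Nat.exists_eq_add_of_le hr
    rw [gaussBinom_add_eq_mul_inv hP, norm_mul, norm_mul]
    gcongr
    exacts [hC _, hD _, hD _]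

end Limit

end GaussianBinomial

section JacobiTripleProduct

/-- The number `n (n - 1) / 2` for an integer `n`, as a natural number so that it can serve as an
exponent. -/
def triangle (n : ℤ) : ℕ := (n * (n - 1) / 2).toNat

lemma two_mul_triangle (n : ℤ) : (2 * triangle n : ℤ) = n * (n - 1) := by
  have heven : (2 : ℤ) ∣ n * (n - 1) := (Int.even_mul_pred_self n).two_dvd
  have hnonneg : 0 ≤ n * (n - 1) := by
    rcases le_or_gt n 0 with h | h <;> nlinarith
  rw [triangle, Int.toNat_of_nonneg (by positivity), Int.mul_ediv_cancel' heven]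

lemma triangle_add_one (n : ℤ) : (triangle (n + 1) : ℤ) = triangle n + n := by
  linarith [two_mul_triangle n, two_mul_triangle (n + 1)]

lemma triangle_one_sub (n : ℤ) : triangle (1 - n) = triangle n := by
  rw [triangle, triangle]
  ring_nf

lemma triangle_natCast (n : ℕ) : triangle n = n.choose 2 := by
  induction n with
  | zero => rfl
  | succ n ih =>
    rw [Nat.choose_succ_succ' n 1, Nat.choose_one_right]
    have h := triangle_add_one n
    push_cast
    lia

/-- The general term `a ^ (n (n + 1) / 2) * b ^ (n (n - 1) / 2)` of Ramanujan's theta series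
`f(a, b) = ∑ n : ℤ, a ^ (n (n + 1) / 2) * b ^ (n (n - 1) / 2)`. -/
def thetaTerm {R : Type*} [Monoid R] (a b : R) (n : ℤ) : R := a ^ triangle (n + 1) * b ^ triangle n

lemma thetaTerm_neg {R : Type*} [CommMonoid R] (a b : R) (n : ℤ) :
    thetaTerm a b (-n) = thetaTerm b a n := by
  rw [thetaTerm, thetaTerm, ← triangle_one_sub (n + 1), ← triangle_one_sub n, mul_comm]
  ring_nf

section CommRing

variable {R : Type*} [CommRing R] (a b : R)

lemma thetaTerm_natCast (n : ℕ) : thetaTerm a b n = (a * b) ^ n.choose 2 * a ^ n := by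
  have h : triangle (n + 1) = triangle n + n := by exact_mod_cast triangle_add_one n
  rw [thetaTerm, h, triangle_natCast]
  ring

lemma thetaTerm_natCast_succ (n : ℕ) :
    thetaTerm a b (n + 1 : ℕ) = a * (a * b) ^ n * thetaTerm a b n := by
  rw [thetaTerm_natCast, thetaTerm_natCast, Nat.choose_succ_succ' n 1, Nat.choose_one_right]
  ring

lemma mul_pow_mul_thetaTerm (N r : ℕ) :
    b * (a * b) ^ N * thetaTerm a b (r - N) =
      (a * b) ^ r * thetaTerm a b (r - (N + 1 : ℕ)) := by
  obtain ⟨n, hn⟩ : ∃ n : ℤ, n = r - (N + 1 : ℕ) := ⟨_, rfl⟩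
  rw [← hn, show (r - N : ℤ) = n + 1 by lia, thetaTerm, thetaTerm]
  have ha : N + triangle (n + 1 + 1) = r + triangle (n + 1) := by
    have := triangle_add_one (n + 1)
    lia
  have hb : 1 + N + triangle (n + 1) = r + triangle n := by
    have := triangle_add_one n
    lia
  calc b * (a * b) ^ N * (a ^ triangle (n + 1 + 1) * b ^ triangle (n + 1))
      = a ^ (N + triangle (n + 1 + 1)) * b ^ (1 + N + triangle (n + 1)) := by ring
    _ = (a * b) ^ r * (a ^ triangle (n + 1) * b ^ triangle n) := by rw [ha, hb]; ring

theorem prod_mul_prod_eq_sum_gaussBinom_mul_thetaTerm (M N : ℕ) :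
    (∏ j ∈ range M, (1 + a * (a * b) ^ j)) * ∏ j ∈ range N, (1 + b * (a * b) ^ j) =
      ∑ r ∈ range (M + N + 1), gaussBinom (a * b) (M + N) r * thetaTerm a b (r - N) := by
  induction N with
  | zero =>
    simp [prod_one_add_mul_pow_eq_sum_gaussBinom, thetaTerm_natCast]
  | succ N ih =>
    rw [prod_range_succ, ← mul_assoc, ih, sum_mul]
    refine Eq.trans (sum_congr rfl fun r _ => ?_)
      (sum_range_gaussBinom_succ (a * b) (M + N) fun r => thetaTerm a b (r - (N + 1 : ℕ))).symm
    rw [← mul_pow_mul_thetaTerm, show ((r + 1 : ℕ) - (N + 1 : ℕ) : ℤ) = r - N by lia]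
    ring

end CommRing

section Limit

variable {a b : ℂ}

lemma summable_thetaTerm_natCast (hab : ‖a * b‖ < 1) :
    Summable fun n : ℕ => thetaTerm a b n := by
  have hratio : Tendsto (fun n => ‖a * (a * b) ^ n‖) atTop (𝓝 0) := by
    simpa using ((tendsto_pow_atTop_nhds_zero_of_norm_lt_one hab).const_mul a).norm
  refine summable_of_ratio_norm_eventually_le one_half_lt_one ?_
  filter_upwards [hratio.eventually_le_const one_half_pos] with n hn
  rw [thetaTerm_natCast_succ, norm_mul]
  gcongr

lemma summable_thetaTerm (hab : ‖a * b‖ < 1) : Summable (thetaTerm a b) := by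
  refine Summable.of_nat_of_neg (summable_thetaTerm_natCast hab) ?_
  simp only [thetaTerm_neg]
  exact summable_thetaTerm_natCast (by rwa [mul_comm])

lemma qPochFin_mul_qPochFin_eq_tsum (a b : ℂ) (N : ℕ) :
    qPochFin (-a) (a * b) N * qPochFin (-b) (a * b) N =
      ∑' n : ℤ, if -N ≤ n then gaussBinom (a * b) (N + N) (n + N).toNat * thetaTerm a b n
        else 0 := by
  have hinj : Function.Injective fun r : ℕ => (r - N : ℤ) := fun r s h => by
    simpa using h
  have h := prod_mul_prod_eq_sum_gaussBinom_mul_thetaTerm a b N N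
  simp only [qPochFin, neg_mul, sub_neg_eq_add, h]
  rw [← hinj.tsum_eq fun n hn => ?_, tsum_eq_sum (s := range (N + N + 1))]
  · simp
  · intro r hr
    rw [gaussBinom_eq_zero_of_lt]
    all_goals simp at hr ⊢; try lia
  · have : -N ≤ n := by by_contra h; simp [h] at hn
    exact ⟨(n + N).toNat, by simp; lia⟩

theorem tsum_thetaTerm (hab : ‖a * b‖ < 1) :
    ∑' n, thetaTerm a b n =
      qPochInf (-a) (a * b) * qPochInf (-b) (a * b) * qPochInf (a * b) (a * b) := by
  obtain ⟨C, hC⟩ := exists_norm_gaussBinom_le hab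
  have hterm : ∀ n : ℤ, Tendsto (fun N : ℕ => if -N ≤ n then
      gaussBinom (a * b) (N + N) (n + N).toNat * thetaTerm a b n else 0) atTop
      (𝓝 ((qPochInf (a * b) (a * b))⁻¹ * thetaTerm a b n)) := fun n => by
    have hr : ∀ m : ℤ, Tendsto (fun N : ℕ => (m + N).toNat) atTop atTop := fun m =>
      tendsto_atTop.2 fun c => (eventually_ge_atTop (c + m.natAbs)).mono fun N hN => by lia
    refine ((tendsto_gaussBinom_add hab (hr n) (hr (-n))).mul_const _).congr' ?_
    filter_upwards [eventually_ge_atTop n.natAbs] with N hN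
    rw [if_pos (by lia), show (n + N).toNat + (-n + N).toNat = N + N by lia]
  have hbound : ∀ N : ℕ, ∀ n : ℤ, ‖if -N ≤ n then
      gaussBinom (a * b) (N + N) (n + N).toNat * thetaTerm a b n else 0‖ ≤
        C * ‖thetaTerm a b n‖ := fun N n => by
    split_ifs
    · rw [norm_mul]
      gcongr
      exact hC _ _
    · rw [norm_zero]
      exact mul_nonneg ((norm_nonneg _).trans (hC 0 0)) (norm_nonneg _)
  have hlim := tendsto_tsum_of_dominated_convergence ((summable_thetaTerm hab).norm.mul_left C)
    hterm (Eventually.of_forall hbound)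
  simp only [← qPochFin_mul_qPochFin_eq_tsum] at hlim
  rw [tsum_mul_left] at hlim
  rw [tendsto_nhds_unique ((tendsto_qPochFin _ hab).mul (tendsto_qPochFin _ hab)) hlim]
  field_simp [qPochInf_self_ne_zero hab]

theorem tsum_nat_thetaTerm_mul (hab : ‖a * b‖ < 1) :
    ∑' n : ℕ, thetaTerm a b n * (1 + b ^ (2 * n + 1)) =
      qPochInf (-a) (a * b) * qPochInf (-b) (a * b) * qPochInf (a * b) (a * b) := by
  have hneg : ∀ n : ℕ, thetaTerm a b (-(n + 1 : ℕ)) = thetaTerm a b n * b ^ (2 * n + 1) :=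
    fun n => by
      rw [thetaTerm_neg, thetaTerm_natCast_succ, thetaTerm_natCast, thetaTerm_natCast]
      ring
  have hs := summable_thetaTerm hab
  have hs_neg : Summable fun n : ℕ => thetaTerm a b (-(n + 1 : ℕ)) :=
    hs.comp_injective fun m n h => by simpa using h
  rw [← tsum_thetaTerm hab, tsum_of_nat_of_neg_add_one (summable_thetaTerm_natCast hab)
    (by exact_mod_cast hs_neg), ← (summable_thetaTerm_natCast hab).tsum_add
    (by exact_mod_cast hs_neg)]
  refine tsum_congr fun n => ?_
  have h := hneg n
  push_cast at h
  rw [h]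
  ring

end Limit

theorem tsum_alternating_theta_eq_qPochInf {q : ℂ} (hq : ‖q‖ < 1) {a d : ℕ} (had : 0 < a + d) :
    ∑' n : ℕ, (-1) ^ n * q ^ ((a + d) * n ^ 2 + d * n) * (1 - q ^ ((2 * n + 1) * a)) =
      qPochInf (q ^ a) (q ^ (2 * (a + d))) * qPochInf (q ^ (a + 2 * d)) (q ^ (2 * (a + d))) *
        qPochInf (q ^ (2 * (a + d))) (q ^ (2 * (a + d))) := by
  have hbase : -q ^ (a + 2 * d) * -q ^ a = q ^ (2 * (a + d)) := by ring
  have hnorm : ‖-q ^ (a + 2 * d) * -q ^ a‖ < 1 := by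
    rw [hbase, norm_pow]
    exact pow_lt_one₀ (norm_nonneg q) hq (by lia)
  have hchoose : ∀ n : ℕ, 2 * n.choose 2 + n = n ^ 2 := fun n => by
    induction n with
    | zero => rfl
    | succ n ih => rw [Nat.choose_succ_succ' n 1, Nat.choose_one_right]; lia
  have htheta := tsum_nat_thetaTerm_mul hnorm
  simp only [hbase, neg_neg, thetaTerm_natCast, mul_comm (qPochInf (q ^ (a + 2 * d)) _)] at htheta
  rw [← htheta]
  refine tsum_congr fun n => ?_
  rw [← hchoose, neg_pow, Odd.neg_pow ⟨n, rfl⟩]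
  ring

end JacobiTripleProduct

section AndrewsSeries

/-- The ratio `(-q; q)_n / (q; q)_n`. -/
noncomputable def overRatio (q : ℂ) (n : ℕ) : ℂ := qPochFin (-q) q n / qPochFin q q n

/-- The `n`-th term of Andrews' series solving the recursion for overpartitions of Gordon type
with modulus `k = i + d`, first index `i` and parts larger than `j`. -/
noncomputable def gordonTerm (q : ℂ) (i d j n : ℕ) : ℂ :=
  (-1) ^ n * q ^ (j * (i + d) * n + (i + d) * n ^ 2 + d * n) * (1 - q ^ ((j + 1 + 2 * n) * i)) *
    (overRatio q n * (overRatio q (n + j))⁻¹)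

/-- Andrews' series, the sum over `n` of `gordonTerm q i d j n`. -/
noncomputable def gordonSeries (q : ℂ) (i d j : ℕ) : ℂ := ∑' n, gordonTerm q i d j n

/-- The part of `gordonTerm q (i + 1) d j n - gordonTerm q i (d + 1) j n` which telescopes when the
recursion for `gordonSeries` is verified term by term. -/
noncomputable def gordonCarry (q : ℂ) (i d j n : ℕ) : ℂ :=
  (-1) ^ n * q ^ (j * (i + d + 1) * n + (i + d + 1) * n ^ 2 + d * n) * (1 - q ^ n) *
    (overRatio q n * (overRatio q (n + j))⁻¹)

lemma overRatio_zero (q : ℂ) : overRatio q 0 = 1 := by simp [overRatio, qPochFin_zero]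

lemma overRatio_succ (q : ℂ) (n : ℕ) :
    overRatio q (n + 1) = overRatio q n * ((1 + q ^ (n + 1)) / (1 - q ^ (n + 1))) := by
  rw [overRatio, overRatio, qPochFin_succ, qPochFin_succ, mul_div_mul_comm, pow_succ', neg_mul,
    sub_neg_eq_add]

lemma gordonSeries_zero (q : ℂ) (d j : ℕ) : gordonSeries q 0 d j = 0 := by
  simp [gordonSeries, gordonTerm]

variable {q : ℂ}

lemma overRatio_ne_zero (hq : ‖q‖ < 1) (n : ℕ) : overRatio q n ≠ 0 :=
  div_ne_zero (qPochFin_neg_self_ne_zero hq n) (qPochFin_self_ne_zero hq n)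

lemma tendsto_overRatio (hq : ‖q‖ < 1) :
    Tendsto (overRatio q) atTop (𝓝 (qPochInf (-q) q / qPochInf q q)) :=
  (tendsto_qPochFin _ hq).div (tendsto_qPochFin _ hq) (qPochInf_self_ne_zero hq)

lemma tendsto_overRatio_inv (hq : ‖q‖ < 1) :
    Tendsto (fun n => (overRatio q n)⁻¹) atTop (𝓝 (qPochInf (-q) q / qPochInf q q)⁻¹) :=
  (tendsto_overRatio hq).inv₀
    (div_ne_zero (qPochInf_neg_self_ne_zero hq) (qPochInf_self_ne_zero hq))

lemma exists_norm_overRatio_mul_le (hq : ‖q‖ < 1) :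
    ∃ C : ℝ, ∀ j c n e, n ≤ e → ‖(-1) ^ n * q ^ e * (1 - q ^ c) *
      (overRatio q n * (overRatio q (n + j))⁻¹)‖ ≤ C * ‖q‖ ^ n := by
  obtain ⟨C, hC⟩ := exists_norm_le_of_tendsto (tendsto_overRatio hq)
  obtain ⟨D, hD⟩ := exists_norm_le_of_tendsto (tendsto_overRatio_inv hq)
  have hC0 : 0 ≤ C := (norm_nonneg _).trans (hC 0)
  refine ⟨2 * (C * D), fun j c n e hne => ?_⟩
  have hsub : ‖1 - q ^ c‖ ≤ 2 := by
    calc ‖1 - q ^ c‖ ≤ ‖(1 : ℂ)‖ + ‖q ^ c‖ := norm_sub_le _ _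
      _ ≤ 1 + 1 := by
          rw [norm_one, norm_pow]
          gcongr
          exact pow_le_one₀ (norm_nonneg q) hq.le
      _ = 2 := one_add_one_eq_two
  have hpow : ‖q‖ ^ e ≤ ‖q‖ ^ n := pow_le_pow_of_le_one (norm_nonneg q) hq.le hne
  calc ‖(-1) ^ n * q ^ e * (1 - q ^ c) * (overRatio q n * (overRatio q (n + j))⁻¹)‖
      = ‖q‖ ^ e * ‖1 - q ^ c‖ * (‖overRatio q n‖ * ‖(overRatio q (n + j))⁻¹‖) := by simp
    _ ≤ ‖q‖ ^ n * 2 * (C * D) := by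
        gcongr
        exacts [hC n, hD (n + j)]
    _ = 2 * (C * D) * ‖q‖ ^ n := by ring

lemma exists_norm_gordonTerm_le (hq : ‖q‖ < 1) :
    ∃ C : ℝ, ∀ i d j n, ‖gordonTerm q i d j n‖ ≤ C * ‖q‖ ^ n := by
  obtain ⟨C, hC⟩ := exists_norm_overRatio_mul_le hq
  refine ⟨C, fun i d j n => ?_⟩
  rcases Nat.eq_zero_or_pos i with rfl | hi
  · simpa [gordonTerm] using (norm_nonneg _).trans (hC 0 0 n n le_rfl)
  · exact hC _ _ _ _ (by nlinarith [Nat.le_self_pow two_ne_zero n, Nat.zero_le (j * (i + d) * n)])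

lemma summable_gordonTerm (hq : ‖q‖ < 1) (i d j : ℕ) : Summable (gordonTerm q i d j) := by
  obtain ⟨C, hC⟩ := exists_norm_gordonTerm_le hq
  exact Summable.of_norm_bounded
    ((summable_geometric_of_lt_one (norm_nonneg q) hq).mul_left C) (hC i d j)

lemma summable_gordonCarry (hq : ‖q‖ < 1) (i d j : ℕ) : Summable (gordonCarry q i d j) := by
  obtain ⟨C, hC⟩ := exists_norm_overRatio_mul_le hq
  refine Summable.of_norm_bounded
    ((summable_geometric_of_lt_one (norm_nonneg q) hq).mul_left C) fun n => hC _ _ _ _ ?_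
  nlinarith [Nat.le_self_pow two_ne_zero n, Nat.zero_le (j * (i + d + 1) * n),
    Nat.zero_le ((i + d) * n ^ 2)]

lemma gordonTerm_sub_add_gordonCarry (hq : ‖q‖ < 1) (i d j n : ℕ) :
    gordonTerm q (i + 1) d j n - gordonTerm q i (d + 1) j n + gordonCarry q i d j (n + 1) =
      q ^ ((j + 1) * i) * (gordonTerm q (d + 1) i (j + 1) n +
        q ^ (j + 1) * gordonTerm q d (i + 1) (j + 1) n) + gordonCarry q i d j n := by
  have hleft : (1 - q ^ (n + 1)) * overRatio q (n + 1) = (1 + q ^ (n + 1)) * overRatio q n := by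
    have := one_sub_pow_ne_zero hq n
    rw [overRatio_succ]
    field_simp
  have hright : (1 - q ^ (n + j + 1)) * (overRatio q (n + j))⁻¹ =
      (1 + q ^ (n + j + 1)) * (overRatio q (n + j + 1))⁻¹ := by
    have := one_sub_pow_ne_zero hq (n + j)
    have := one_add_pow_ne_zero hq (n + j)
    have := overRatio_ne_zero hq (n + j)
    rw [overRatio_succ]
    field_simp
  simp only [gordonTerm, gordonCarry, show n + 1 + j = n + j + 1 by ring, ← add_assoc]
  linear_combination (-1) ^ (n + 1) * q ^ (j * (i + d + 1) * (n + 1) +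
      (i + d + 1) * (n + 1) ^ 2 + d * (n + 1)) * (overRatio q (n + j + 1))⁻¹ * hleft +
    (-1) ^ n * q ^ (j * (i + d + 1) * n + (i + d + 1) * n ^ 2 + d * n + n + 2 * n * i +
      (j + 1) * i) * overRatio q n * hright

lemma gordonSeries_sub (hq : ‖q‖ < 1) (i d j : ℕ) :
    gordonSeries q (i + 1) d j - gordonSeries q i (d + 1) j =
      q ^ ((j + 1) * i) * (gordonSeries q (d + 1) i (j + 1) +
        q ^ (j + 1) * gordonSeries q d (i + 1) (j + 1)) := by
  have hT := fun i d j => (summable_gordonTerm hq i d j).hasSum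
  have hC := summable_gordonCarry hq i d j
  have hC0 : gordonCarry q i d j 0 = 0 := by simp [gordonCarry]
  have hshift : HasSum (fun n => gordonCarry q i d j (n + 1)) (∑' n, gordonCarry q i d j n) := by
    rw [hC.tsum_eq_zero_add, hC0, zero_add]
    exact ((summable_nat_add_iff 1).2 hC).hasSum
  have h := ((hT (i + 1) d j).sub (hT i (d + 1) j)).add hshift
  simp only [gordonTerm_sub_add_gordonCarry hq] at h
  exact add_right_cancel (h.unique ((((hT (d + 1) i (j + 1)).add
    ((hT d (i + 1) (j + 1)).mul_left _)).mul_left _).add hC.hasSum))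

lemma gordonSeries_eq_sum (hq : ‖q‖ < 1) {k i : ℕ} (hi : i ≤ k) (j : ℕ) :
    gordonSeries q i (k - i) j = ∑ b ∈ range i, q ^ ((j + 1) * b) *
      (gordonSeries q (k - b) b (j + 1) +
        q ^ (j + 1) * gordonSeries q (k - b - 1) (b + 1) (j + 1)) := by
  induction i with
  | zero => simp [gordonSeries_zero]
  | succ i ih =>
    obtain ⟨d, rfl⟩ := Nat.exists_eq_add_of_le hi
    have h := gordonSeries_sub hq i d j
    rw [sum_range_succ, ← ih (by lia), show i + 1 + d - (i + 1) = d by lia,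
      show i + 1 + d - i = d + 1 by lia, add_tsub_cancel_right]
    linear_combination h

lemma tendsto_gordonSeries (hq : ‖q‖ < 1) {i : ℕ} (hi : 0 < i) (d : ℕ) :
    Tendsto (gordonSeries q i d) atTop (𝓝 (qPochInf (-q) q / qPochInf q q)⁻¹) := by
  obtain ⟨C, hC⟩ := exists_norm_gordonTerm_le hq
  have hpow : ∀ e : ℕ → ℕ, (∀ j, j ≤ e j) → Tendsto (fun j => q ^ e j) atTop (𝓝 0) :=
    fun e he => (tendsto_pow_atTop_nhds_zero_of_norm_lt_one hq).comp
      (tendsto_atTop_mono he tendsto_id)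
  have hterm : ∀ n, Tendsto (fun j => gordonTerm q i d j n) atTop
      (𝓝 (if n = 0 then (qPochInf (-q) q / qPochInf q q)⁻¹ else 0)) := fun n => by
    have hover : Tendsto (fun j => (overRatio q (n + j))⁻¹) atTop
        (𝓝 (qPochInf (-q) q / qPochInf q q)⁻¹) :=
      (tendsto_overRatio_inv hq).comp (tendsto_atTop_mono (Nat.le_add_left · n) tendsto_id)
    have hfac : Tendsto (fun j => 1 - q ^ ((j + 1 + 2 * n) * i)) atTop (𝓝 (1 - 0)) :=
      tendsto_const_nhds.sub (hpow _ fun j => by nlinarith)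
    split_ifs with hn
    · subst hn
      simpa [gordonTerm, overRatio_zero] using hfac.mul hover
    · have hzero := hpow (fun j => j * (i + d) * n + (i + d) * n ^ 2 + d * n) fun j => by
        have : 0 < (i + d) * n := Nat.mul_pos (by lia) (Nat.pos_of_ne_zero hn)
        nlinarith [Nat.zero_le ((i + d) * n ^ 2 + d * n)]
      simpa [gordonTerm] using
        ((hzero.const_mul ((-1) ^ n)).mul hfac).mul (hover.const_mul (overRatio q n))
  have h := tendsto_tsum_of_dominated_convergence
    ((summable_geometric_of_lt_one (norm_nonneg q) hq).mul_left C) hterm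
    (Eventually.of_forall fun j n => hC i d j n)
  rwa [tsum_ite_eq] at h

lemma gordonSeries_zero_right (hq : ‖q‖ < 1) {a d : ℕ} (had : 0 < a + d) :
    gordonSeries q a d 0 = qPochInf (q ^ a) (q ^ (2 * (a + d))) *
      qPochInf (q ^ (a + 2 * d)) (q ^ (2 * (a + d))) *
        qPochInf (q ^ (2 * (a + d))) (q ^ (2 * (a + d))) := by
  rw [← tsum_alternating_theta_eq_qPochInf hq had]
  refine tsum_congr fun n => ?_
  rw [gordonTerm, add_zero n, mul_inv_cancel₀ (overRatio_ne_zero hq n)]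
  ring

end AndrewsSeries

section GordonRecursion

/-- The `q`-difference system characterising generating functions of overpartitions of Gordon type
with modulus `k`: in `F j i`, all parts exceed `j` and the part `j + 1` occurs non-overlined fewer
than `i` times. Removing all parts `j + 1`, of which `b` are non-overlined, and distinguishing
whether `j + 1` also occurs overlined, gives the summands. -/
def GordonRecursion (q : ℂ) (k : ℕ) (F : ℕ → ℕ → ℂ) : Prop :=
  ∀ j, ∀ i ≤ k, F j i = ∑ b ∈ range i,
    q ^ ((j + 1) * b) * (F (j + 1) (k - b) + q ^ (j + 1) * F (j + 1) (k - b - 1))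

lemma gordonRecursion_gordonSeries {q : ℂ} (hq : ‖q‖ < 1) (k : ℕ) :
    GordonRecursion q k fun j i => gordonSeries q i (k - i) j := fun j i hi => by
  refine (gordonSeries_eq_sum hq hi j).trans (sum_congr rfl fun b hb => ?_)
  have hb := mem_range.1 hb
  dsimp only
  rw [show k - (k - b) = b by lia, show k - (k - b - 1) = b + 1 by lia]

variable {q : ℂ} {k : ℕ} {F G : ℕ → ℕ → ℂ}

lemma GordonRecursion.const_mul (hF : GordonRecursion q k F) (c : ℂ) :
    GordonRecursion q k fun j i => c * F j i := fun j i hi => by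
  simp only [hF j i hi, mul_sum]
  exact sum_congr rfl fun b _ => by ring

lemma GordonRecursion.sub (hF : GordonRecursion q k F) (hG : GordonRecursion q k G) :
    GordonRecursion q k fun j i => F j i - G j i := fun j i hi => by
  simp only [hF j i hi, hG j i hi, ← sum_sub_distrib]
  exact sum_congr rfl fun b _ => by ring

lemma GordonRecursion.norm_le (hF : GordonRecursion q k F) (hq : ‖q‖ < 1) {j : ℕ} {B : ℝ}
    (hB : ∀ i ≤ k, ‖F (j + 1) i‖ ≤ B) {i : ℕ} (hi : i ≤ k) :
    ‖F j i‖ ≤ (1 + 2 * ‖q‖ ^ (j + 1) / (1 - ‖q‖)) * B := by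
  set x := ‖q‖ ^ (j + 1) with hx
  have hx0 : 0 ≤ x := by positivity
  have hxq : x ≤ ‖q‖ := pow_le_of_le_one (norm_nonneg q) hq.le j.succ_ne_zero
  have hB0 : 0 ≤ B := (norm_nonneg _).trans (hB 0 k.zero_le)
  have hterm : ∀ b, ‖q ^ ((j + 1) * b) * (F (j + 1) (k - b) + q ^ (j + 1) * F (j + 1) (k - b - 1))‖
      ≤ x ^ b * ((1 + x) * B) := fun b => by
    rw [norm_mul, norm_pow, pow_mul]
    gcongr
    calc ‖F (j + 1) (k - b) + q ^ (j + 1) * F (j + 1) (k - b - 1)‖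
        ≤ ‖F (j + 1) (k - b)‖ + x * ‖F (j + 1) (k - b - 1)‖ := by
          rw [hx, ← norm_pow, ← norm_mul]
          exact norm_add_le _ _
      _ ≤ B + x * B := by gcongr <;> exact hB _ (by lia)
      _ = (1 + x) * B := by ring
  have hgeom : ∑ b ∈ range i, x ^ b ≤ (1 - x)⁻¹ := by
    rw [← tsum_geometric_of_lt_one hx0 (hxq.trans_lt hq)]
    exact (summable_geometric_of_lt_one hx0 (hxq.trans_lt hq)).sum_le_tsum _
      fun b _ => pow_nonneg hx0 b
  have hx1 : 0 < 1 - x := by linarith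
  calc ‖F j i‖ ≤ ∑ b ∈ range i, x ^ b * ((1 + x) * B) := by
        rw [hF j i hi]
        exact norm_sum_le_of_le _ fun b _ => hterm b
    _ ≤ (1 - x)⁻¹ * ((1 + x) * B) := by
        rw [← sum_mul]
        gcongr
    _ = (1 + 2 * x / (1 - x)) * B := by
        field_simp
        ring
    _ ≤ (1 + 2 * x / (1 - ‖q‖)) * B := by
        have : 0 < 1 - ‖q‖ := by linarith
        gcongr

lemma nonpos_of_le_one_add_mul_succ {u M : ℕ → ℝ} (hu0 : ∀ j, 0 ≤ u j) (hu : Summable u)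
    (hM : ∀ j, M j ≤ (1 + u j) * M (j + 1)) (hlim : Tendsto M atTop (𝓝 0)) (j : ℕ) : M j ≤ 0 := by
  set c : ℕ → ℝ := fun j => ∏ l ∈ range j, (1 + u l) with hc
  have hcpos : ∀ j, 0 < c j := fun j => prod_pos fun l _ => by linarith [hu0 l]
  have hmono : Monotone fun j => c j * M j := monotone_nat_of_le_succ fun j => by
    calc c j * M j ≤ c j * ((1 + u j) * M (j + 1)) := by gcongr; exacts [(hcpos j).le, hM j]
      _ = c (j + 1) * M (j + 1) := by rw [hc]; simp only [prod_range_succ]; ring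
  have hclim := (multipliable_one_add_of_summable hu.norm).hasProd.tendsto_prod_nat
  have hle := hmono.ge_of_tendsto (by simpa using hclim.mul hlim) j
  exact nonpos_of_mul_nonpos_right hle (hcpos j)

theorem GordonRecursion.eq_zero_of_tendsto (hF : GordonRecursion q k F) (hq : ‖q‖ < 1)
    (hlim : ∀ i ≤ k, Tendsto (F · i) atTop (𝓝 0)) (j : ℕ) {i : ℕ} (hi : i ≤ k) : F j i = 0 := by
  set M : ℕ → ℝ := fun j => ‖fun i : Fin (k + 1) => F j i‖ with hMdef
  have hFM : ∀ j, ∀ i ≤ k, ‖F j i‖ ≤ M j := fun j i hi =>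
    norm_le_pi_norm (fun i : Fin (k + 1) => F j i) ⟨i, Nat.lt_succ_of_le hi⟩
  have hMlim : Tendsto M atTop (𝓝 0) := by
    rw [hMdef, ← norm_zero (E := Fin (k + 1) → ℂ)]
    exact (tendsto_pi_nhds.2 fun i : Fin (k + 1) => hlim i (Nat.le_of_lt_succ i.2)).norm
  have hM : ∀ j, M j ≤ (1 + 2 * ‖q‖ ^ (j + 1) / (1 - ‖q‖)) * M (j + 1) := fun j => by
    refine (pi_norm_le_iff_of_nonneg ?_).2 fun i =>
      hF.norm_le hq (hFM (j + 1)) (Nat.le_of_lt_succ i.2)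
    have : 0 ≤ 1 - ‖q‖ := by linarith
    positivity
  have hsum : Summable fun j => 2 * ‖q‖ ^ (j + 1) / (1 - ‖q‖) :=
    (((summable_nat_add_iff 1).2 (summable_geometric_of_lt_one (norm_nonneg q) hq)).mul_left
      2).div_const _
  have hnonpos := nonpos_of_le_one_add_mul_succ (fun j => ?_) hsum hM hMlim j
  · exact norm_le_zero_iff.1 ((hFM j i hi).trans hnonpos)
  · have : 0 ≤ 1 - ‖q‖ := by linarith
    positivity

end GordonRecursion

section OverpartitionSums

lemma opWt_eq_weight_add_weight (p : (ℕ →₀ ℕ) × (ℕ →₀ ℕ)) :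
    opWt p = Finsupp.weight id p.1 + Finsupp.weight id p.2 := by
  simp only [opWt, Finsupp.weight_apply, smul_eq_mul, id, mul_comm]

lemma opWt_zero : opWt 0 = 0 := rfl

lemma opWt_add (p p' : (ℕ →₀ ℕ) × (ℕ →₀ ℕ)) : opWt (p + p') = opWt p + opWt p' := by
  simp only [opWt_eq_weight_add_weight, Prod.fst_add, Prod.snd_add, map_add]
  ring

lemma pow_weight_le_prod_graph {r : ℝ} (hr0 : 0 ≤ r) (hr1 : r ≤ 1) {f : ℕ →₀ ℕ} (hf : f 0 = 0) :
    r ^ Finsupp.weight id f ≤ ∏ x ∈ f.graph, r ^ (x.1 - 1) * r ^ (x.2 - 1) := by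
  have hweight : Finsupp.weight id f = ∑ x ∈ f.graph, x.1 * x.2 := by
    simp only [Finsupp.weight_apply, Finsupp.sum, Finsupp.graph, sum_map, smul_eq_mul, id, mul_comm]
    rfl
  rw [hweight, ← prod_pow_eq_pow_sum]
  refine prod_le_prod (fun _ _ => pow_nonneg hr0 _) fun ⟨l, b⟩ hlb => ?_
  obtain ⟨rfl, hb⟩ := Finsupp.mk_mem_graph_iff.1 hlb
  obtain ⟨l, rfl⟩ := Nat.exists_eq_succ_of_ne_zero (show l ≠ 0 from fun h => hb (h ▸ hf))
  obtain ⟨b, hb⟩ := Nat.exists_eq_succ_of_ne_zero hb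
  rw [← pow_add]
  refine pow_le_pow_of_le_one hr0 hr1 ?_
  simp only [hb, Nat.succ_eq_add_one, add_tsub_cancel_right]
  nlinarith

-- Sending `f` to its graph embeds the partitions into the finite sets of pairs `(l, b)`, so
-- their sum is dominated by the convergent product of the `1 + r ^ (l - 1) * r ^ (b - 1)`.
lemma summable_pow_weight {r : ℝ} (hr0 : 0 ≤ r) (hr1 : r < 1) :
    Summable fun f : {f : ℕ →₀ ℕ // f 0 = 0} => r ^ Finsupp.weight id f.1 := by
  have hpred : Summable fun n : ℕ => r ^ (n - 1) :=
    (summable_nat_add_iff 1).1 (summable_geometric_of_lt_one hr0 hr1)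
  have hpred0 : 0 ≤ fun n : ℕ => r ^ (n - 1) := fun n => pow_nonneg hr0 (n - 1)
  have hpair := hpred.mul_of_nonneg hpred hpred0 hpred0
  have hpair0 : ∀ x : ℕ × ℕ, 0 ≤ r ^ (x.1 - 1) * r ^ (x.2 - 1) := fun x => by positivity
  have hgraph : Function.Injective fun f : {f : ℕ →₀ ℕ // f 0 = 0} => f.1.graph :=
    (Finsupp.graph_injective ℕ ℕ).comp Subtype.val_injective
  have hprod : Summable fun f : {f : ℕ →₀ ℕ // f 0 = 0} =>
      ∏ x ∈ f.1.graph, r ^ (x.1 - 1) * r ^ (x.2 - 1) :=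
    (summable_finsetProd_of_summable_nonneg hpair0 hpair).comp_injective hgraph
  exact hprod.of_nonneg_of_le (fun f => pow_nonneg hr0 _)
    fun f => pow_weight_le_prod_graph hr0 hr1.le f.2

variable {q : ℂ}

lemma summable_pow_opWt (hq : ‖q‖ < 1) {s : Set ((ℕ →₀ ℕ) × (ℕ →₀ ℕ))}
    (hs : ∀ p ∈ s, IsOverPtn p) : Summable fun p : s => q ^ opWt p.1 := by
  have h := summable_pow_weight (norm_nonneg q) hq
  have hinj : Function.Injective fun p : s =>
      ((⟨p.1.1, (hs _ p.2).1⟩, ⟨p.1.2, (hs _ p.2).2.1⟩) :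
        {f : ℕ →₀ ℕ // f 0 = 0} × {f : ℕ →₀ ℕ // f 0 = 0}) := fun p p' hpp' => by
    simp only [Prod.mk.injEq, Subtype.mk.injEq] at hpp'
    exact Subtype.ext (Prod.ext hpp'.1 hpp'.2)
  refine Summable.of_norm (((h.mul_of_nonneg h (fun _ => by positivity)
    fun _ => by positivity).comp_injective hinj).congr fun p => ?_)
  rw [norm_pow, opWt_eq_weight_add_weight, pow_add]
  rfl

lemma tsum_ubarCount_mul_pow (hq : ‖q‖ < 1) (d N M : ℕ) :
    ∑' mn : ℕ × ℕ, (ubarCount d N M mn.1 mn.2 : ℂ) * q ^ mn.2 =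
      ∑' p : {p | IsOverPtn p ∧ ubarCond d N M p}, q ^ opWt p.1 := by
  set s := {p | IsOverPtn p ∧ ubarCond d N M p}
  set g : s → ℕ × ℕ := fun p => (opParts p.1, opWt p.1)
  have hsum := (summable_pow_opWt hq (s := s) fun p hp => hp.1).hasSum
  rw [← (hsum.tsum_fiberwise g).tsum_eq]
  refine tsum_congr fun mn => ?_
  have hwt : ∀ p : g ⁻¹' {mn}, q ^ opWt p.1.1 = q ^ mn.2 := fun p =>
    congrArg (fun x : ℕ × ℕ => q ^ x.2) (show g p.1 = mn from p.2)
  rw [tsum_congr hwt, tsum_const, nsmul_eq_mul, Nat.card_coe_set_eq,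
    ← Set.ncard_image_of_injective _ Subtype.val_injective, ubarCount]
  congr 3
  ext p
  constructor
  · rintro ⟨hp, hparts, hwt, hcond⟩
    exact ⟨⟨p, hp, hcond⟩, Prod.ext hparts hwt, rfl⟩
  · rintro ⟨p, hp, rfl⟩
    exact ⟨p.2.1, congrArg Prod.fst hp, congrArg Prod.snd hp, p.2.2⟩

end OverpartitionSums

section GordonOverpartitions

/-- The overpartitions of Gordon type with modulus `k`, all of whose parts exceed `j` and in which
`j + 1` occurs non-overlined fewer than `i` times: `f_l + f_{l̄} + f_{l+1} < k` for all `l`. For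
`j = 0` these are the overpartitions in the Chen–Sang–Shi theorem. -/
def gordonSet (k j i : ℕ) : Set ((ℕ →₀ ℕ) × (ℕ →₀ ℕ)) :=
  {p | (∀ l ≤ j, p.1 l = 0 ∧ p.2 l = 0) ∧ (∀ l, p.2 l ≤ 1) ∧ p.1 (j + 1) < i ∧
    ∀ l, j < l → p.1 l + p.2 l + p.1 (l + 1) < k}

/-- The generating function, by weight, of `gordonSet k j i`. -/
noncomputable def gordonGf (q : ℂ) (k j i : ℕ) : ℂ := ∑' p : gordonSet k j i, q ^ opWt p.1

/-- The pair of multiplicity functions with `b` non-overlined and `e` overlined parts, all of them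
equal to `l`. -/
noncomputable def equalParts (l b e : ℕ) : (ℕ →₀ ℕ) × (ℕ →₀ ℕ) :=
  (Finsupp.single l b, Finsupp.single l e)

lemma opWt_equalParts (l b e : ℕ) : opWt (equalParts l b e) = l * (b + e) := by
  simp [opWt_eq_weight_add_weight, equalParts, Finsupp.weight_single]
  ring

lemma isOverPtn_of_mem_gordonSet {k j i : ℕ} {p : (ℕ →₀ ℕ) × (ℕ →₀ ℕ)}
    (hp : p ∈ gordonSet k j i) : IsOverPtn p :=
  ⟨(hp.1 0 j.zero_le).1, (hp.1 0 j.zero_le).2, hp.2.1⟩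

lemma gordonSet_zero_right (k j : ℕ) : gordonSet k j 0 = ∅ :=
  Set.eq_empty_of_forall_notMem fun _ hp => Nat.not_lt_zero _ hp.2.2.1

lemma equalParts_add_mem_gordonSet_iff {k j i b e : ℕ} {p : (ℕ →₀ ℕ) × (ℕ →₀ ℕ)}
    (hp : ∀ l ≤ j + 1, p.1 l = 0 ∧ p.2 l = 0) :
    equalParts (j + 1) b e + p ∈ gordonSet k j i ↔
      b < i ∧ e < 2 ∧ p ∈ gordonSet k (j + 1) (k - b - e) := by
  have hself := hp (j + 1) le_rfl
  have hb : (equalParts (j + 1) b e + p).1 (j + 1) = b := by simp [equalParts, hself.1]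
  have he : (equalParts (j + 1) b e + p).2 (j + 1) = e := by simp [equalParts, hself.2]
  have hne : ∀ l ≠ j + 1, (equalParts (j + 1) b e + p).1 l = p.1 l ∧
      (equalParts (j + 1) b e + p).2 l = p.2 l := fun l hl => by
    simp [equalParts, hl.symm]
  constructor
  · rintro ⟨-, hle, hi, hk⟩
    refine ⟨hb ▸ hi, Nat.lt_succ_of_le (he ▸ hle (j + 1)), hp, fun l => ?_, ?_, fun l hl => ?_⟩
    · rcases eq_or_ne l (j + 1) with rfl | hl
      · lia
      · exact (hne l hl).2 ▸ hle l
    · have h := hk (j + 1) j.lt_succ_self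
      rw [hb, he, (hne _ (by lia)).1] at h
      lia
    · have h := hk l (by lia)
      rwa [(hne l (by lia)).1, (hne l (by lia)).2, (hne _ (by lia)).1] at h
  · rintro ⟨hbi, he2, -, hle, hk', hk⟩
    refine ⟨fun l hl => ?_, fun l => ?_, hb.trans_lt hbi, fun l hl => ?_⟩
    · rw [(hne l (by lia)).1, (hne l (by lia)).2]
      exact hp l (by lia)
    · rcases eq_or_ne l (j + 1) with rfl | hl
      · lia
      · exact (hne l hl).2.symm ▸ hle l
    · rcases eq_or_ne l (j + 1) with rfl | hl'
      · rw [hb, he, (hne _ (by lia)).1]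
        lia
      · rw [(hne l hl').1, (hne l hl').2, (hne _ (by lia)).1]
        exact hk l (by lia)

lemma gordonSet_eq_biUnion (k j i : ℕ) :
    gordonSet k j i = ⋃ x ∈ range i ×ˢ range 2,
      (equalParts (j + 1) x.1 x.2 + ·) '' gordonSet k (j + 1) (k - x.1 - x.2) := by
  ext p
  simp only [Set.mem_iUnion, Set.mem_image, mem_product, mem_range, exists_prop]
  constructor
  · intro hp
    have herase : equalParts (j + 1) (p.1 (j + 1)) (p.2 (j + 1)) +
        (p.1.erase (j + 1), p.2.erase (j + 1)) = p :=
      Prod.ext (Finsupp.single_add_erase _ _) (Finsupp.single_add_erase _ _)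
    have hvanish : ∀ l ≤ j + 1, p.1.erase (j + 1) l = 0 ∧ p.2.erase (j + 1) l = 0 :=
      fun l hl => by
        rcases eq_or_ne l (j + 1) with rfl | hl'
        · simp
        · rw [Finsupp.erase_ne hl', Finsupp.erase_ne hl']
          exact hp.1 l (by lia)
    obtain ⟨hb, he, h⟩ := (equalParts_add_mem_gordonSet_iff hvanish).1 (herase.symm ▸ hp)
    exact ⟨(_, _), ⟨hb, he⟩, _, h, herase⟩
  · rintro ⟨⟨b, e⟩, ⟨hb, he⟩, p, hp, rfl⟩
    exact (equalParts_add_mem_gordonSet_iff hp.1).2 ⟨hb, he, hp⟩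

lemma pairwiseDisjoint_equalParts_add (k j : ℕ) (s : Set (ℕ × ℕ)) :
    s.PairwiseDisjoint fun x =>
      (equalParts (j + 1) x.1 x.2 + ·) '' gordonSet k (j + 1) (k - x.1 - x.2) := by
  intro x _ y _ hxy
  refine Set.disjoint_left.2 ?_
  rintro _ ⟨p, hp, rfl⟩ ⟨p', hp', h⟩
  refine hxy (Prod.ext ?_ ?_)
  · simpa [equalParts, (hp.1 _ le_rfl).1, (hp'.1 _ le_rfl).1] using
      (DFunLike.congr_fun (congrArg Prod.fst h) (j + 1)).symm
  · simpa [equalParts, (hp.1 _ le_rfl).2, (hp'.1 _ le_rfl).2] using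
      (DFunLike.congr_fun (congrArg Prod.snd h) (j + 1)).symm

variable {q : ℂ}

lemma gordonRecursion_gordonGf (hq : ‖q‖ < 1) (k : ℕ) :
    GordonRecursion q k (gordonGf q k) := fun j i _ => by
  have himage : ∀ x : ℕ × ℕ,
      ∑' p : (equalParts (j + 1) x.1 x.2 + ·) '' gordonSet k (j + 1) (k - x.1 - x.2),
        q ^ opWt p.1 = q ^ ((j + 1) * (x.1 + x.2)) * gordonGf q k (j + 1) (k - x.1 - x.2) :=
    fun x => by
      rw [tsum_image (fun p => q ^ opWt p) (add_right_injective _).injOn, gordonGf, ← tsum_mul_left]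
      simp only [opWt_add, opWt_equalParts, pow_add]
  have hsummable : ∀ x ∈ range i ×ˢ range 2, Summable fun p :
      (equalParts (j + 1) x.1 x.2 + ·) '' gordonSet k (j + 1) (k - x.1 - x.2) => q ^ opWt p.1 :=
    fun x hx => summable_pow_opWt hq fun p hp =>
      isOverPtn_of_mem_gordonSet (gordonSet_eq_biUnion k j i ▸ Set.mem_biUnion hx hp)
  rw [gordonGf, gordonSet_eq_biUnion, Summable.tsum_finset_bUnion_disjoint
    (f := fun p => q ^ opWt p) (pairwiseDisjoint_equalParts_add k j _) hsummable]
  simp only [himage, sum_product, sum_range_succ _ 1, range_one, sum_singleton, add_zero,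
    Nat.sub_zero]
  exact sum_congr rfl fun b _ => by ring

lemma zero_mem_gordonSet {k i : ℕ} (hi : 0 < i) (hk : 0 < k) (j : ℕ) : 0 ∈ gordonSet k j i :=
  ⟨fun _ _ => ⟨rfl, rfl⟩, fun _ => zero_le_one, hi, fun _ _ => hk⟩

lemma eventually_notMem_gordonSet (k i : ℕ) {p : (ℕ →₀ ℕ) × (ℕ →₀ ℕ)} (hp : p ≠ 0) :
    ∀ᶠ j in atTop, p ∉ gordonSet k j i := by
  obtain ⟨l, hl⟩ : ∃ l, ¬(p.1 l = 0 ∧ p.2 l = 0) := by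
    by_contra! h
    exact hp (Prod.ext (Finsupp.ext fun l => (h l).1) (Finsupp.ext fun l => (h l).2))
  filter_upwards [eventually_ge_atTop l] with j hj hmem
  exact hl (hmem.1 l hj)

lemma tendsto_gordonGf (hq : ‖q‖ < 1) {k i : ℕ} (hi : 0 < i) (hk : 0 < k) :
    Tendsto (gordonGf q k · i) atTop (𝓝 1) := by
  let f : (ℕ →₀ ℕ) × (ℕ →₀ ℕ) → ℂ := fun p => q ^ opWt p
  have hbound : Summable ({p | IsOverPtn p}.indicator fun p => ‖f p‖) :=
    summable_subtype_iff_indicator.1 (summable_pow_opWt hq fun p hp => hp).norm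
  have hle : ∀ j p, ‖(gordonSet k j i).indicator f p‖ ≤
      {p | IsOverPtn p}.indicator (fun p => ‖f p‖) p := fun j p => by
    rw [norm_indicator_eq_indicator_norm]
    exact Set.indicator_le_indicator_of_subset (fun p => isOverPtn_of_mem_gordonSet)
      (fun _ => norm_nonneg _) p
  have hpt : ∀ p, Tendsto (fun j => (gordonSet k j i).indicator f p) atTop
      (𝓝 (({0} : Set _).indicator f p)) := fun p => by
    rcases eq_or_ne p 0 with rfl | hp
    · simp [zero_mem_gordonSet hi hk]
    · refine tendsto_const_nhds.congr' ?_
      filter_upwards [eventually_notMem_gordonSet k i hp] with j hj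
      simp [hp, hj]
  have hlim := tendsto_tsum_of_dominated_convergence hbound hpt (.of_forall hle)
  simp only [← _root_.tsum_subtype, tsum_singleton] at hlim
  simpa only [gordonGf, f, opWt_zero, pow_zero] using hlim

end GordonOverpartitions

section ChenSangShi

variable {q : ℂ}

lemma gordonGf_eq_mul_gordonSeries (hq : ‖q‖ < 1) {k i : ℕ} (hi : i ≤ k) (j : ℕ) :
    gordonGf q k j i = qPochInf (-q) q / qPochInf q q * gordonSeries q i (k - i) j := by
  set c := qPochInf (-q) q / qPochInf q q
  have hc : c ≠ 0 := div_ne_zero (qPochInf_neg_self_ne_zero hq) (qPochInf_self_ne_zero hq)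
  have hrec := (gordonRecursion_gordonGf hq k).sub
    ((gordonRecursion_gordonSeries hq k).const_mul c)
  refine sub_eq_zero.1 (hrec.eq_zero_of_tendsto hq (fun i hi => ?_) j hi)
  rcases i.eq_zero_or_pos with rfl | hpos
  · simp [gordonGf, gordonSet_zero_right, gordonSeries_zero]
  · have h := (tendsto_gordonGf hq hpos (hpos.trans_le hi)).sub
      ((tendsto_gordonSeries hq hpos (k - i)).const_mul c)
    rwa [mul_inv_cancel₀ hc, sub_self] at h

/-- The Rogers–Ramanujan–Gordon theorem for overpartitions, due to Chen, Sang and Shi. -/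
theorem gordonGf_zero_eq_qPochInf (hq : ‖q‖ < 1) {a d : ℕ} (had : 0 < a + d) :
    gordonGf q (a + d) 0 a = qPochInf (-q) q / qPochInf q q *
      (qPochInf (q ^ a) (q ^ (2 * (a + d))) * qPochInf (q ^ (a + 2 * d)) (q ^ (2 * (a + d))) *
        qPochInf (q ^ (2 * (a + d))) (q ^ (2 * (a + d)))) := by
  rw [gordonGf_eq_mul_gordonSeries hq (Nat.le_add_right a d), Nat.add_sub_cancel_left,
    gordonSeries_zero_right hq had]

end ChenSangShi

section Halving

/-- The multiplicity function of the partition into the distinct even parts `2 * m + 2`,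
`m ∈ S`. -/
noncomputable def evenParts (S : Finset ℕ) : ℕ →₀ ℕ := ∑ m ∈ S, Finsupp.single (2 * m + 2) 1

/-- The overpartition obtained from `g` by doubling the multiplicity of every non-overlined part,
adding a non-overlined copy of each overlined part, and adding the distinct even parts indexed by
`S`. -/
noncomputable def doubled (g : (ℕ →₀ ℕ) × (ℕ →₀ ℕ)) (S : Finset ℕ) : (ℕ →₀ ℕ) × (ℕ →₀ ℕ) :=
  (2 • g.1 + g.2 + evenParts S, g.2)

lemma evenParts_apply_even (S : Finset ℕ) (m : ℕ) :
    evenParts S (2 * m + 2) = if m ∈ S then 1 else 0 := by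
  simp [evenParts, Finsupp.finsetSum_apply, Finsupp.single_apply]

lemma evenParts_apply_eq_zero (S : Finset ℕ) {l : ℕ} (hl : ∀ m, l ≠ 2 * m + 2) :
    evenParts S l = 0 := by
  simp [evenParts, Finsupp.finsetSum_apply, (hl _).symm]

lemma evenParts_zero_apply (S : Finset ℕ) : evenParts S 0 = 0 :=
  evenParts_apply_eq_zero S fun m => by lia

lemma evenParts_apply_odd (S : Finset ℕ) (l : ℕ) : evenParts S (2 * l + 1) = 0 :=
  evenParts_apply_eq_zero S fun m => by lia

lemma evenParts_apply_le_one (S : Finset ℕ) (l : ℕ) : evenParts S l ≤ 1 := by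
  by_cases hl : ∃ m, l = 2 * m + 2
  · obtain ⟨m, rfl⟩ := hl
    rw [evenParts_apply_even]
    split <;> lia
  · exact (evenParts_apply_eq_zero S (not_exists.1 hl)).trans_le zero_le_one

lemma evenParts_add_succ_le_one (S : Finset ℕ) (l : ℕ) :
    evenParts S l + evenParts S (l + 1) ≤ 1 := by
  have h := evenParts_apply_le_one S
  obtain ⟨m, rfl | rfl⟩ := Nat.even_or_odd' l
  · rw [evenParts_apply_odd, add_zero]
    exact h _
  · rw [evenParts_apply_odd, zero_add]
    exact h _

lemma evenParts_injective : Function.Injective evenParts := fun S T h => by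
  ext m
  have hm := DFunLike.congr_fun h (2 * m + 2)
  simp only [evenParts_apply_even] at hm
  by_cases hS : m ∈ S <;> by_cases hT : m ∈ T <;> simp_all

lemma opWt_doubled (g : (ℕ →₀ ℕ) × (ℕ →₀ ℕ)) (S : Finset ℕ) :
    opWt (doubled g S) = 2 * (opWt g + ∑ m ∈ S, (m + 1)) := by
  simp only [opWt_eq_weight_add_weight, doubled, evenParts, map_add, map_nsmul, map_sum,
    Finsupp.weight_single, smul_eq_mul, id, one_mul, mul_add, mul_sum, mul_one]
  ring

lemma doubled_injective :
    Function.Injective fun x : ((ℕ →₀ ℕ) × (ℕ →₀ ℕ)) × Finset ℕ => doubled x.1 x.2 := by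
  rintro ⟨⟨g₁, g₂⟩, S⟩ ⟨⟨h₁, h₂⟩, T⟩ h
  obtain ⟨hfst, rfl⟩ := Prod.mk.inj h
  have hval : ∀ l, g₁ l = h₁ l ∧ evenParts S l = evenParts T l := fun l => by
    have hl := DFunLike.congr_fun hfst l
    have hS := evenParts_apply_le_one S l
    have hT := evenParts_apply_le_one T l
    simp only [Finsupp.add_apply, Finsupp.smul_apply, smul_eq_mul] at hl
    lia
  obtain rfl : g₁ = h₁ := Finsupp.ext fun l => (hval l).1
  obtain rfl : S = T := evenParts_injective (Finsupp.ext fun l => (hval l).2)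
  rfl

lemma ubarCond_doubled_iff {k a : ℕ} {g : (ℕ →₀ ℕ) × (ℕ →₀ ℕ)} {S : Finset ℕ} :
    IsOverPtn (doubled g S) ∧ ubarCond 2 (2 * k) (2 * a) (doubled g S) ↔
      g ∈ gordonSet k 0 a := by
  have hS := evenParts_add_succ_le_one S
  have hfst : ∀ l, (doubled g S).1 l = 2 * g.1 l + g.2 l + evenParts S l := fun l => by
    simp [doubled]
  have hsnd : ∀ l, (doubled g S).2 l = g.2 l := fun _ => rfl
  have hone := evenParts_apply_odd S 0
  simp only [IsOverPtn, ubarCond, hfst, hsnd, evenParts_zero_apply, evenParts_apply_odd]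
  constructor
  · rintro ⟨⟨h1, h2, hle⟩, ha, -, -, hk⟩
    refine ⟨fun l hl => ?_, hle, by lia, fun l hl => ?_⟩
    · obtain rfl := Nat.le_zero.1 hl
      exact ⟨by lia, h2⟩
    · have := hk l hl
      lia
  · rintro ⟨h0, hle, ha, hk⟩
    obtain ⟨h1, h2⟩ := h0 0 le_rfl
    refine ⟨⟨by lia, h2, hle⟩, by lia, fun l => by lia, fun l => by lia, fun l hl => ?_⟩
    have := hk l hl
    have := hS l
    lia

lemma le_of_ubarCond {N M : ℕ} {p : (ℕ →₀ ℕ) × (ℕ →₀ ℕ)} (hp : IsOverPtn p)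
    (hcond : ubarCond 2 N M p) (l : ℕ) : p.2 l ≤ p.1 l := by
  obtain ⟨m, rfl | rfl⟩ := Nat.even_or_odd' l
  · cases m with
    | zero => exact hp.2.1.trans_le (Nat.zero_le _)
    | succ m => simpa [mul_add] using hcond.2.1 m
  · have hle := hp.2.2 (2 * m + 1)
    have hdvd := hcond.2.2.1 m
    lia

lemma exists_doubled_eq {N M : ℕ} {p : (ℕ →₀ ℕ) × (ℕ →₀ ℕ)} (hp : IsOverPtn p)
    (hcond : ubarCond 2 N M p) : ∃ g S, doubled g S = p := by
  have hle := le_of_ubarCond hp hcond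
  have hinj : Function.Injective fun m : ℕ => 2 * m + 2 := fun m n h => by lia
  set S : Finset ℕ := {m ∈ p.1.support.preimage _ hinj.injOn |
    (p.1 (2 * m + 2) - p.2 (2 * m + 2)) % 2 = 1}
  have hS : ∀ m, m ∈ S ↔ (p.1 (2 * m + 2) - p.2 (2 * m + 2)) % 2 = 1 := fun m => by
    simp only [S, mem_filter, mem_preimage, Finsupp.mem_support_iff, and_iff_right_iff_imp]
    lia
  refine ⟨((p.1 - p.2).mapRange (· / 2) rfl, p.2), S, Prod.ext (Finsupp.ext fun l => ?_) rfl⟩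
  have hl := hle l
  suffices h : evenParts S l = (p.1 l - p.2 l) % 2 by
    simp only [doubled, Finsupp.add_apply, Finsupp.smul_apply, Finsupp.mapRange_apply,
      Finsupp.tsub_apply, smul_eq_mul, h]
    lia
  obtain ⟨m, rfl | rfl⟩ := Nat.even_or_odd' l
  · cases m with
    | zero => simp [evenParts_zero_apply, hp.1]
    | succ m =>
      rw [mul_add_one, evenParts_apply_even]
      have := hS m
      split <;> lia
  · have hdvd := hcond.2.2.1 m
    rw [evenParts_apply_odd]
    lia

lemma setOf_ubarCond_eq_range (k a : ℕ) :
    {p | IsOverPtn p ∧ ubarCond 2 (2 * k) (2 * a) p} =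
      Set.range fun x : gordonSet k 0 a × Finset ℕ => doubled x.1 x.2 := by
  ext p
  constructor
  · intro hp
    obtain ⟨g, S, rfl⟩ := exists_doubled_eq hp.1 hp.2
    exact ⟨(⟨g, ubarCond_doubled_iff.1 hp⟩, S), rfl⟩
  · rintro ⟨⟨g, S⟩, rfl⟩
    exact ubarCond_doubled_iff.2 g.2

variable {q : ℂ}

lemma summable_norm_pow_succ (hq : ‖q‖ < 1) : Summable fun m : ℕ => ‖q ^ (m + 1)‖ := by
  simp only [norm_pow]
  exact (summable_nat_add_iff 1).2 (summable_geometric_of_lt_one (norm_nonneg q) hq)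

lemma qPochInf_neg_self_eq_tsum (hq : ‖q‖ < 1) :
    qPochInf (-q) q = ∑' S : Finset ℕ, ∏ m ∈ S, q ^ (m + 1) := by
  rw [← tprod_one_add (summable_finsetProd_of_summable_norm (summable_norm_pow_succ hq)), qPochInf]
  exact tprod_congr fun m => by ring

theorem tsum_ubarCond_two_mul (hq : ‖q‖ < 1) (k a : ℕ) :
    ∑' p : {p | IsOverPtn p ∧ ubarCond 2 (2 * k) (2 * a) p}, q ^ opWt p.1 =
      gordonGf (q ^ 2) k 0 a * qPochInf (-(q ^ 2)) (q ^ 2) := by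
  have hq2 : ‖q ^ 2‖ < 1 := norm_pow_succ_lt_one hq 1
  have hinj : Function.Injective fun x : gordonSet k 0 a × Finset ℕ => doubled x.1 x.2 :=
    fun x y h => by
      obtain ⟨hg, hS⟩ := Prod.mk.inj (@doubled_injective (x.1, x.2) (y.1, y.2) h)
      exact Prod.ext (Subtype.ext hg) hS
  have hgordon := (summable_pow_opWt hq2 (s := gordonSet k 0 a) fun _ =>
    isOverPtn_of_mem_gordonSet).norm
  have hparts := (summable_finsetProd_of_summable_norm (summable_norm_pow_succ hq2)).norm
  rw [setOf_ubarCond_eq_range, tsum_range (fun p => q ^ opWt p) hinj,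
    qPochInf_neg_self_eq_tsum hq2, gordonGf, tsum_mul_tsum_of_summable_norm hgordon hparts]
  simp only [opWt_doubled, pow_mul, prod_pow_eq_pow_sum, ← pow_add]

lemma ubarCond_two_mul_sub_one_iff {N a : ℕ} (ha : 1 ≤ a) {p : (ℕ →₀ ℕ) × (ℕ →₀ ℕ)} :
    ubarCond 2 N (2 * a - 1) p ↔ ubarCond 2 N (2 * a) p := by
  refine and_congr_left fun h => ?_
  have hdvd := h.2.1 0
  lia

end Halving

/-- Sang–Shi–Yee (Theorem 1.13): for `1 ≤ a ≤ k`,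
`Σ_{n≥0} Ū_{2k, 2a-1}(n) q^n = Σ_{n≥0} Ū_{2k, 2a}(n) q^n
  = (−q^2; q^2)_∞^2 (q^{2a}, q^{4k-2a}, q^{4k}; q^{4k})_∞ / (q^2; q^2)_∞`. -/
theorem sang_shi_yee_barred (k a : ℕ) (hk : 1 ≤ k) (ha : 1 ≤ a) (hak : a ≤ k)
    (q : ℂ) (hq : ‖q‖ < 1) :
    (∑' mn : ℕ × ℕ, (ubarCount 2 (2 * k) (2 * a - 1) mn.1 mn.2 : ℂ) * q ^ mn.2)
      = (∑' mn : ℕ × ℕ, (ubarCount 2 (2 * k) (2 * a) mn.1 mn.2 : ℂ) * q ^ mn.2) ∧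
    (∑' mn : ℕ × ℕ, (ubarCount 2 (2 * k) (2 * a) mn.1 mn.2 : ℂ) * q ^ mn.2)
      = qPochInf (-(q ^ 2)) (q ^ 2) ^ 2 * qPochInf (q ^ (2 * a)) (q ^ (4 * k))
        * qPochInf (q ^ (4 * k - 2 * a)) (q ^ (4 * k))
        * qPochInf (q ^ (4 * k)) (q ^ (4 * k)) / qPochInf (q ^ 2) (q ^ 2) := by
  obtain ⟨d, rfl⟩ := Nat.exists_eq_add_of_le hak
  have hq2 : ‖q ^ 2‖ < 1 := norm_pow_succ_lt_one hq 1
  refine ⟨by simp only [ubarCount, ubarCond_two_mul_sub_one_iff ha], ?_⟩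
  have hsub : 4 * (a + d) - 2 * a = 2 * (a + 2 * d) := by lia
  have hmul : 4 * (a + d) = 2 * (2 * (a + d)) := by ring
  rw [tsum_ubarCount_mul_pow hq, tsum_ubarCond_two_mul hq, gordonGf_zero_eq_qPochInf hq2 hk,
    hsub, hmul]
  simp only [pow_mul]
  ring
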